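/- arXiv:1601.07051 — 2 statements merged into one kernel-verified Lean document; each statement's English description precedes it below -/
import Mathlib

section
/- Let θ be a smooth function on ℝ^n. For every subset J ⊆ {1,…,n} and every smooth f : ℝ^n → ℝ, the commutator of L_J with multiplication by θ satisfies L_J(θ·f) − θ·(L_J f) = Σ_{∅≠K⊆J} (∂_K θ) · (L_{J∖K} f), where the sum is over all nonempty subsets K of J. -/
/-!
Both sides are sums over pairs of disjoint subsets of `J`. The Leibniz rule for square-free
multi-indices (`pdSet_mul`) reads
`∂_M (θ f) = ∑_{K ⊆ M} ∂_K θ · ∂_{M∖K} f`. Inserting it into `L_J (θ f)` and exchanging the sums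
along the bijection `(M, K) ↦ (K, M ∖ K)` between `{K ⊆ M ⊆ J}` and `{K ⊆ J, N ⊆ J ∖ K}` gives
`L_J (θ f) = ∑_{K ⊆ J} ∂_K θ · L_{J∖K} f`, whose term at `K = ∅` is `θ · L_J f`.

The Leibniz rule is proved by induction, adding at each step an index smaller than all previous
ones. As `pdSet` composes the partial derivatives in increasing order, the new derivative is then
outermost, and the symmetry of mixed derivatives is not needed.
-/

/-- The `i`-th partial derivative of a function on `ℝⁿ`. -/
noncomputable def pd {n : ℕ} (i : Fin n) (f : (Fin n → ℝ) → ℝ) : (Fin n → ℝ) → ℝ :=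
  fun x => fderiv ℝ f x (Pi.single i 1)

/-- The composite partial derivative `∂_J = ∏_{i ∈ J} ∂_i` over a subset `J`. -/
noncomputable def pdSet {n : ℕ} (J : Finset (Fin n)) (f : (Fin n → ℝ) → ℝ) :
    (Fin n → ℝ) → ℝ :=
  (J.sort (· ≤ ·)).foldr pd f

/-- The operator `L_J f = Σ_{K ⊆ J} a_{J∖K} · ∂_K f`. -/
noncomputable def Lop {n : ℕ} (a : Finset (Fin n) → (Fin n → ℝ) → ℝ)
    (J : Finset (Fin n)) (f : (Fin n → ℝ) → ℝ) : (Fin n → ℝ) → ℝ :=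
  fun x => ∑ K ∈ J.powerset, a (J \ K) x * pdSet K f x

theorem contDiff_pd {n : ℕ} (i : Fin n) {f : (Fin n → ℝ) → ℝ}
    (hf : ContDiff ℝ (⊤ : ℕ∞) f) : ContDiff ℝ (⊤ : ℕ∞) (pd i f) :=
  (hf.fderiv_right (m := (⊤ : ℕ∞)) (by simp)).clm_apply contDiff_const

theorem contDiff_pdSet {n : ℕ} (J : Finset (Fin n)) {f : (Fin n → ℝ) → ℝ}
    (hf : ContDiff ℝ (⊤ : ℕ∞) f) : ContDiff ℝ (⊤ : ℕ∞) (pdSet J f) := by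
  unfold pdSet
  induction J.sort (· ≤ ·) with
  | nil => exact hf
  | cons i l ih => exact contDiff_pd i ih

theorem pdSet_empty {n : ℕ} (f : (Fin n → ℝ) → ℝ) : pdSet ∅ f = f := by
  simp [pdSet]

/-- An index smaller than all those of `s` contributes the outermost derivative. -/
theorem pdSet_insert {n : ℕ} {i : Fin n} {s : Finset (Fin n)} (h : ∀ j ∈ s, i < j)
    (f : (Fin n → ℝ) → ℝ) : pdSet (insert i s) f = pd i (pdSet s f) := by
  unfold pdSet
  rw [Finset.sort_insert (· ≤ ·) (fun j hj => (h j hj).le) (fun hi => (h i hi).false)]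
  rfl

/-- The Leibniz rule for square-free multi-indices. -/
theorem pdSet_mul {n : ℕ} {θ f : (Fin n → ℝ) → ℝ}
    (hθ : ContDiff ℝ (⊤ : ℕ∞) θ) (hf : ContDiff ℝ (⊤ : ℕ∞) f) (J : Finset (Fin n)) :
    pdSet J (fun y => θ y * f y) =
      fun x => ∑ K ∈ J.powerset, pdSet K θ x * pdSet (J \ K) f x := by
  have hd : ∀ (K : Finset (Fin n)) {g : (Fin n → ℝ) → ℝ}, ContDiff ℝ (⊤ : ℕ∞) g →
      Differentiable ℝ (pdSet K g) :=
    fun K g hg => (contDiff_pdSet K hg).differentiable (by simp)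
  induction J using Finset.induction_on_min with
  | empty => simp [pdSet_empty]
  | insert i s hi ih =>
    have his : i ∉ s := fun h => (hi i h).false
    rw [pdSet_insert hi, ih]
    funext x
    rw [Finset.sum_powerset_insert his, ← Finset.sum_add_distrib]
    unfold pd
    rw [fderiv_fun_sum (fun K _ => (hd K hθ x).fun_mul (hd (s \ K) hf x)),
      sum_apply]
    refine Finset.sum_congr rfl fun K hK => ?_
    have hKs := Finset.mem_powerset.1 hK
    have hiK : i ∉ K := fun h => his (hKs h)
    rw [fderiv_fun_mul (hd K hθ x) (hd (s \ K) hf x), Finset.insert_sdiff_of_notMem _ hiK,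
      Finset.insert_sdiff_insert, Finset.sdiff_insert_of_notMem his,
      pdSet_insert (fun j hj => hi j (hKs hj)),
      pdSet_insert (fun j hj => hi j (Finset.sdiff_subset hj))]
    simp [pd]
    ring

/-- The commutator formula with the term at `K = ∅` moved to the right-hand side. -/
theorem Lop_mul {n : ℕ} (a : Finset (Fin n) → (Fin n → ℝ) → ℝ) (J : Finset (Fin n))
    {θ f : (Fin n → ℝ) → ℝ} (hθ : ContDiff ℝ (⊤ : ℕ∞) θ) (hf : ContDiff ℝ (⊤ : ℕ∞) f)
    (x : Fin n → ℝ) :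
    Lop a J (fun y => θ y * f y) x = ∑ K ∈ J.powerset, pdSet K θ x * Lop a (J \ K) f x := by
  simp only [Lop, pdSet_mul hθ hf, Finset.mul_sum]
  rw [Finset.sum_sigma', Finset.sum_sigma']
  refine Finset.sum_bij' (fun p _ => ⟨p.2, p.1 \ p.2⟩) (fun q _ => ⟨q.1 ∪ q.2, q.1⟩)
    ?_ ?_ ?_ ?_ ?_
  · rintro ⟨M, K⟩ h
    simp only [Finset.mem_sigma, Finset.mem_powerset] at h ⊢
    exact ⟨h.2.trans h.1, Finset.sdiff_subset_sdiff h.1 le_rfl⟩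
  · rintro ⟨K, N⟩ h
    simp only [Finset.mem_sigma, Finset.mem_powerset] at h ⊢
    exact ⟨Finset.union_subset h.1 (h.2.trans Finset.sdiff_subset), Finset.subset_union_left⟩
  · rintro ⟨M, K⟩ h
    simp only [Finset.mem_sigma, Finset.mem_powerset] at h
    simp [Finset.union_eq_right.2 h.2]
  · rintro ⟨K, N⟩ h
    simp only [Finset.mem_sigma, Finset.mem_powerset] at h
    have hKN : Disjoint N K := Finset.disjoint_of_subset_left h.2 Finset.sdiff_disjoint
    simp [Finset.union_sdiff_cancel_left hKN.symm]
  · rintro ⟨M, K⟩ h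
    simp only [Finset.mem_sigma, Finset.mem_powerset] at h
    have hJ : (J \ K) \ (M \ K) = J \ M := by
      ext j
      have := @h.2 j
      simp only [Finset.mem_sdiff]
      tauto
    simp only [hJ]
    ring

/-- `L_J(θ·f) − θ·(L_J f) = Σ_{∅≠K⊆J} (∂_K θ) · (L_{J∖K} f)`. -/
theorem laplace_theta_map {n : ℕ} (hn : 1 ≤ n)
    (a : Finset (Fin n) → (Fin n → ℝ) → ℝ)
    (ha : ∀ K, ContDiff ℝ (⊤ : ℕ∞) (a K)) (ha0 : a ∅ = fun _ => 1)
    (J : Finset (Fin n)) (θ f : (Fin n → ℝ) → ℝ)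
    (hθ : ContDiff ℝ (⊤ : ℕ∞) θ) (hf : ContDiff ℝ (⊤ : ℕ∞) f) (x : Fin n → ℝ) :
    Lop a J (fun y => θ y * f y) x - θ x * Lop a J f x =
      ∑ K ∈ J.powerset.filter (· ≠ ∅), pdSet K θ x * Lop a (J \ K) f x := by
  rw [Lop_mul a J hθ hf, Finset.filter_ne',
    ← Finset.add_sum_erase _ _ (Finset.empty_mem_powerset J), pdSet_empty, Finset.sdiff_empty]
  ring
end

section
/- For any two subsets J, K ⊆ {1,…,n}, the commutator L_J∘L_K − L_K∘L_J is a differential operator of order at most |J| + |K| − 2: there exists a family of smooth functions c_α : ℝ^n → ℝ, indexed by multi-indices α ∈ ℕ^n with |α| ≤ |J| + |K| − 2, such that for every smooth f : ℝ^n → ℝ, L_J(L_K f) − L_K(L_J f) = Σ_α c_α · ∂^α f. -/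
/-- The iterated partial derivative `∂^α` attached to a multi-index `α ∈ ℕⁿ`. -/
noncomputable def pdMulti {n : ℕ} (α : Fin n → ℕ) (f : (Fin n → ℝ) → ℝ) :
    (Fin n → ℝ) → ℝ :=
  (List.finRange n).foldr (fun i g => (pd i)^[α i] g) f

namespace CommOrder

/-! ### Differential operators generated by derivations -/

section Algebra

variable {R A ι : Type*} [CommRing R] [CommRing A] [Algebra R A] (δ : ι → Derivation R A A)

/-- A derivation viewed as an element of the endomorphism ring. -/
def der (i : ι) : Module.End R A := (δ i : A →ₗ[R] A)

/-- The composite of the derivations `δ i` along a list of indices. -/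
def word (l : List ι) : Module.End R A := (l.map (der δ)).prod

/-- The `A`-module of operators of order at most `d`: left linear combinations of words of length
at most `d` in the derivations. -/
def diffOp (d : ℕ) : Submodule A (Module.End R A) :=
  Submodule.span A {P | ∃ l : List ι, l.length ≤ d ∧ P = word δ l}

lemma word_cons (i : ι) (l : List ι) : word δ (i :: l) = der δ i * word δ l := by
  simp [word]

lemma word_mem {l : List ι} {d : ℕ} (h : l.length ≤ d) : word δ l ∈ diffOp δ d :=
  Submodule.subset_span ⟨l, h, rfl⟩

lemma diffOp_mono {d e : ℕ} (h : d ≤ e) : diffOp δ d ≤ diffOp δ e := by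
  apply Submodule.span_mono
  rintro P ⟨l, hl, rfl⟩
  exact ⟨l, hl.trans h, rfl⟩

lemma smul_mul_end (c : A) (P Q : Module.End R A) : (c • P) * Q = c • (P * Q) := rfl

/-- The Leibniz rule as an identity of operators. -/
lemma der_mul_smul (i : ι) (c : A) (P : Module.End R A) :
    der δ i * (c • P) = c • (der δ i * P) + (δ i c) • P := by
  ext x
  simp [der, mul_comm]

lemma mul_word_mem {q : ℕ} {Q : Module.End R A} (hQ : Q ∈ diffOp δ q) (l : List ι) :
    Q * word δ l ∈ diffOp δ (q + l.length) := by
  induction hQ using Submodule.span_induction with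
  | mem P h =>
    obtain ⟨l', hl', rfl⟩ := h
    have : word δ l' * word δ l = word δ (l' ++ l) := by simp [word]
    rw [this]
    exact word_mem δ (by simp; omega)
  | zero => simp
  | add P Q _ _ hP hQ => rw [add_mul]; exact add_mem hP hQ
  | smul c P _ hP => rw [smul_mul_end]; exact Submodule.smul_mem _ _ hP

variable (hc : ∀ i j, Commute (der δ i) (der δ j))

include hc

lemma commute_word (i : ι) (l : List ι) : Commute (der δ i) (word δ l) := by
  apply Commute.list_prod_right
  intro P hP
  obtain ⟨j, -, rfl⟩ := List.mem_map.1 hP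
  exact hc i j

/-- Commuting with one derivation only differentiates the coefficients, so the order does not
increase. -/
lemma comm_der_mem (i : ι) {q : ℕ} {Q : Module.End R A} (hQ : Q ∈ diffOp δ q) :
    der δ i * Q - Q * der δ i ∈ diffOp δ q := by
  induction hQ using Submodule.span_induction with
  | mem P h =>
    obtain ⟨l, hl, rfl⟩ := h
    rw [(commute_word δ hc i l).eq, sub_self]
    exact zero_mem _
  | zero => simp
  | add P Q _ _ hP hQ =>
    have : der δ i * (P + Q) - (P + Q) * der δ i =
      (der δ i * P - P * der δ i) + (der δ i * Q - Q * der δ i) := by noncomm_ring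
    rw [this]
    exact add_mem hP hQ
  | smul c P hP' hP =>
    have : der δ i * (c • P) - (c • P) * der δ i =
      c • (der δ i * P - P * der δ i) + (δ i c) • P := by
      rw [der_mul_smul, smul_mul_end, smul_sub]; abel
    rw [this]
    exact add_mem (Submodule.smul_mem _ _ hP) (Submodule.smul_mem _ _ hP')

lemma der_mul_mem (i : ι) {q : ℕ} {Q : Module.End R A} (hQ : Q ∈ diffOp δ q) :
    der δ i * Q ∈ diffOp δ (q + 1) := by
  have h1 := diffOp_mono δ (Nat.le_succ q) (comm_der_mem δ hc i hQ)
  have h2 := mul_word_mem δ hQ [i]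
  simp only [word, List.map_cons, List.map_nil, List.prod_cons, List.prod_nil, mul_one,
    List.length_singleton] at h2
  simpa using add_mem h1 h2

lemma word_mul_mem (l : List ι) {q : ℕ} {Q : Module.End R A} (hQ : Q ∈ diffOp δ q) :
    word δ l * Q ∈ diffOp δ (q + l.length) := by
  induction l with
  | nil => simpa [word] using hQ
  | cons i l ih =>
    rw [word_cons, mul_assoc]
    exact der_mul_mem δ hc i ih

lemma mul_mem_diffOp {p q : ℕ} {P Q : Module.End R A} (hP : P ∈ diffOp δ p)
    (hQ : Q ∈ diffOp δ q) : P * Q ∈ diffOp δ (p + q) := by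
  induction hP using Submodule.span_induction with
  | mem P h =>
    obtain ⟨l, hl, rfl⟩ := h
    exact diffOp_mono δ (by omega) (word_mul_mem δ hc l hQ)
  | zero => simp
  | add P Q _ _ hP hQ => rw [add_mul]; exact add_mem hP hQ
  | smul c P _ hP => rw [smul_mul_end]; exact Submodule.smul_mem _ _ hP

/-- The commutator of a word of length `l.length + 1` with an operator of order `q` loses one order;
by induction on the word, since `[∂ᵢ P, Q] = ∂ᵢ [P, Q] + [∂ᵢ, Q] P`. -/
lemma comm_word_mem (l : List ι) (i : ι) {q : ℕ} {Q : Module.End R A} (hQ : Q ∈ diffOp δ q) :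
    word δ (i :: l) * Q - Q * word δ (i :: l) ∈ diffOp δ (q + l.length) := by
  induction l generalizing i with
  | nil => simpa [word] using comm_der_mem δ hc i hQ
  | cons j l ih =>
    have : word δ (i :: j :: l) * Q - Q * word δ (i :: j :: l) =
        der δ i * (word δ (j :: l) * Q - Q * word δ (j :: l)) +
          (der δ i * Q - Q * der δ i) * word δ (j :: l) := by
      rw [word_cons δ i]; simp only [mul_sub, sub_mul, mul_assoc]; abel
    rw [this]
    exact add_mem (der_mul_mem δ hc i (ih j)) (mul_word_mem δ (comm_der_mem δ hc i hQ) (j :: l))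

/-- Two operators with commuting nonempty words as leading terms have a commutator of order at
least two below that of their product: the leading terms cancel and every other bracket is
lower by two. -/
lemma comm_mem {l l' : List ι} {p q : ℕ} (hl : l.length = p + 1) (hl' : l'.length = q + 1)
    {P Q : Module.End R A} (hP : P ∈ diffOp δ p) (hQ : Q ∈ diffOp δ q) :
    (word δ l + P) * (word δ l' + Q) - (word δ l' + Q) * (word δ l + P) ∈ diffOp δ (p + q) := by
  have h0 : word δ l * word δ l' = word δ l' * word δ l := by
    refine (Commute.list_prod_left _ _ ?_).eq
    intro P hP
    obtain ⟨j, -, rfl⟩ := List.mem_map.1 hP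
    exact commute_word δ hc j l'
  have h1 : word δ l * Q - Q * word δ l ∈ diffOp δ (p + q) := by
    obtain ⟨i, m, rfl⟩ := List.exists_cons_of_length_eq_add_one hl
    exact diffOp_mono δ (by simp at hl; omega) (comm_word_mem δ hc m i hQ)
  have h2 : word δ l' * P - P * word δ l' ∈ diffOp δ (p + q) := by
    obtain ⟨i, m, rfl⟩ := List.exists_cons_of_length_eq_add_one hl'
    exact diffOp_mono δ (by simp at hl'; omega) (comm_word_mem δ hc m i hP)
  have h3 := mul_mem_diffOp δ hc hP hQ
  have h4 := mul_mem_diffOp δ hc hQ hP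
  rw [add_comm q p] at h4
  have : (word δ l + P) * (word δ l' + Q) - (word δ l' + Q) * (word δ l + P) =
      (word δ l * Q - Q * word δ l) - (word δ l' * P - P * word δ l') + (P * Q - Q * P) := by
    simp only [add_mul, mul_add, h0]; abel
  rw [this]
  exact add_mem (sub_mem h1 h2) (sub_mem h3 h4)

end Algebra

/-! ### Normal form of words, and the operators `L_J` -/

section Multi

variable {R A : Type*} [CommRing R] [CommRing A] [Algebra R A] {n : ℕ}
  (δ : Fin n → Derivation R A A)

/-- The operator `∂^α`, with the factors taken in increasing order of the index. -/
def multi (α : Fin n → ℕ) : Module.End R A :=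
  ((List.finRange n).map fun i => der δ i ^ α i).prod

lemma der_mul_list (hc : ∀ i j, Commute (der δ i) (der δ j)) (α : Fin n → ℕ) (j : Fin n)
    (l : List (Fin n)) (hl : l.Nodup) (hj : j ∈ l) :
    der δ j * (l.map fun i => der δ i ^ α i).prod =
      (l.map fun i => der δ i ^ (α + Pi.single j 1 : Fin n → ℕ) i).prod := by
  induction l with
  | nil => simp at hj
  | cons k l ih =>
    rw [List.nodup_cons] at hl
    simp only [List.map_cons, List.prod_cons]
    by_cases hk : j = k
    · subst hk
      have h : ∀ i ∈ l, der δ i ^ α i = der δ i ^ (α + Pi.single j 1 : Fin n → ℕ) i := by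
        intro i hi
        have : i ≠ j := fun h => hl.1 (h ▸ hi)
        simp [this]
      rw [List.map_congr_left h, ← mul_assoc, ← pow_succ']
      simp
    · have hj' : j ∈ l := by simpa [hk] using hj
      rw [← ih hl.2 hj', ← mul_assoc, ((hc j k).pow_right (α k)).eq, mul_assoc]
      simp [Ne.symm hk]

lemma der_mul_multi (hc : ∀ i j, Commute (der δ i) (der δ j)) (α : Fin n → ℕ) (j : Fin n) :
    der δ j * multi δ α = multi δ (α + Pi.single j 1) :=
  der_mul_list δ hc α j _ (List.nodup_finRange n) (List.mem_finRange j)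

/-- As the derivations commute, a word can be sorted into some `∂^α` of the same order. -/
lemma word_eq_multi (hc : ∀ i j, Commute (der δ i) (der δ j)) (l : List (Fin n)) :
    ∃ α : Fin n → ℕ, ∑ i, α i = l.length ∧ word δ l = multi δ α := by
  induction l with
  | nil => exact ⟨0, by simp, by simp [word, multi]⟩
  | cons i l ih =>
    obtain ⟨α, h1, h2⟩ := ih
    refine ⟨α + Pi.single i 1, ?_, ?_⟩
    · simp [Finset.sum_add_distrib, h1]
    · rw [word_cons, h2, der_mul_multi δ hc]

/-- The sum ranges over all `α` with `|α| ≤ d`; the bound `α i < d + 1` is then automatic. -/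
lemma exists_coeff (hc : ∀ i j, Commute (der δ i) (der δ j)) {d : ℕ} {P : Module.End R A}
    (hP : P ∈ diffOp δ d) :
    ∃ c : (Fin n → ℕ) → A, P = ∑ α ∈ (Fintype.piFinset fun _ : Fin n =>
      Finset.range (d + 1)).filter (fun α => ∑ i, α i ≤ d), c α • multi δ α := by
  set S := (Fintype.piFinset fun _ : Fin n =>
      Finset.range (d + 1)).filter (fun α => ∑ i, α i ≤ d) with hS
  have h : diffOp δ d ≤ Submodule.span A (multi δ '' (S : Set (Fin n → ℕ))) := by
    apply Submodule.span_le.2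
    rintro _ ⟨l, hl, rfl⟩
    obtain ⟨α, h1, h2⟩ := word_eq_multi δ hc l
    refine Submodule.subset_span ⟨α, ?_, h2.symm⟩
    have h3 : ∀ i, α i ≤ ∑ i, α i := fun i =>
      Finset.single_le_sum (f := α) (fun _ _ => Nat.zero_le _) (Finset.mem_univ i)
    simp only [hS, Finset.coe_filter, Fintype.mem_piFinset, Finset.mem_range, Set.mem_ofPred_eq]
    exact ⟨fun i => by have := h3 i; omega, by omega⟩
  obtain ⟨c, hc⟩ := Submodule.mem_span_image_finset_iff_exists_fun A |>.1 (h hP)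
  refine ⟨fun α => if hα : α ∈ S then c ⟨α, hα⟩ else 0, ?_⟩
  rw [← hc, ← Finset.sum_coe_sort S]
  simp

/-- The operator `L_J` attached to derivations `δ i` and coefficients `a`. -/
def lop (a : Finset (Fin n) → A) (J : Finset (Fin n)) :
    Module.End R A :=
  ∑ K ∈ J.powerset, a (J \ K) • word δ (K.sort (· ≤ ·))

lemma lop_empty (a : Finset (Fin n) → A) (ha : a ∅ = 1) : lop δ a ∅ = 1 := by
  simp [lop, ha, word]

/-- By `a ∅ = 1` the operator `L_J` has leading term `∂_J`; the proper subsets of `J` contribute only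
lower order. -/
lemma lop_eq (a : Finset (Fin n) → A) (ha : a ∅ = 1) (J : Finset (Fin n)) {p : ℕ}
    (hJ : J.card = p + 1) :
    ∃ B ∈ diffOp δ p, lop δ a J = word δ (J.sort (· ≤ ·)) + B := by
  refine ⟨∑ K ∈ J.ssubsets, a (J \ K) • word δ (K.sort (· ≤ ·)), ?_, ?_⟩
  · refine Submodule.sum_mem (diffOp δ p) fun K hK =>
      Submodule.smul_mem (diffOp δ p) (a (J \ K)) (word_mem δ ?_)
    have := Finset.card_lt_card (Finset.mem_ssubsets.1 hK)
    rw [Finset.length_sort]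
    omega
  · rw [lop, ← Finset.add_sum_erase _ _ (Finset.mem_powerset_self J)]
    simp [ha, Finset.ssubsets]

/-- The commutator `L_J L_K - L_K L_J`. -/
def lopComm (a : Finset (Fin n) → A) (J K : Finset (Fin n)) : Module.End R A :=
  lop δ a J * lop δ a K - lop δ a K * lop δ a J

lemma lopComm_eq_zero (a : Finset (Fin n) → A) (ha : a ∅ = 1) {J K : Finset (Fin n)}
    (h : J = ∅ ∨ K = ∅) : lopComm δ a J K = 0 := by
  rcases h with rfl | rfl <;> simp [lopComm, lop_empty δ a ha]

lemma lopComm_mem (hc : ∀ i j, Commute (der δ i) (der δ j)) (a : Finset (Fin n) → A)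
    (ha : a ∅ = 1) {J K : Finset (Fin n)} {p q : ℕ} (hp : J.card = p + 1) (hq : K.card = q + 1) :
    lopComm δ a J K ∈ diffOp δ (p + q) := by
  obtain ⟨P, hP, hJ⟩ := lop_eq δ a ha J hp
  obtain ⟨Q, hQ, hK⟩ := lop_eq δ a ha K hq
  rw [lopComm, hJ, hK]
  exact comm_mem δ hc ((Finset.length_sort (· ≤ ·)).trans hp)
    ((Finset.length_sort (· ≤ ·)).trans hq) hP hQ

end Multi

/-! ### Smooth functions and their partial derivatives -/

/-- The algebra of smooth functions on `ℝⁿ`. -/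
def Smooth (n : ℕ) : Subalgebra ℝ ((Fin n → ℝ) → ℝ) where
  carrier := {f | ContDiff ℝ (⊤ : ℕ∞) f}
  mul_mem' hf hg := by
    simp only [Set.mem_ofPred_eq] at *
    exact ContDiff.mul hf hg
  add_mem' hf hg := by
    simp only [Set.mem_ofPred_eq] at *
    exact ContDiff.add hf hg
  algebraMap_mem' _ := by
    simp only [Set.mem_ofPred_eq]
    exact contDiff_const

variable {n : ℕ}

lemma mem_smooth {f : (Fin n → ℝ) → ℝ} : f ∈ Smooth n ↔ ContDiff ℝ (⊤ : ℕ∞) f := by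
  rw [← SetLike.mem_coe]
  simp [Smooth]

lemma Smooth.contDiff (f : Smooth n) : ContDiff ℝ (⊤ : ℕ∞) (f : (Fin n → ℝ) → ℝ) :=
  mem_smooth.1 f.2

lemma Smooth.differentiable (f : Smooth n) : Differentiable ℝ (f : (Fin n → ℝ) → ℝ) :=
  (Smooth.contDiff f).differentiable (by simp)

lemma contDiff_pd (i : Fin n) {f : (Fin n → ℝ) → ℝ} (hf : ContDiff ℝ (⊤ : ℕ∞) f) :
    ContDiff ℝ (⊤ : ℕ∞) (pd i f) :=
  (hf.fderiv_right (m := (⊤ : ℕ∞)) (by simp)).clm_apply contDiff_const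

/-- The `i`-th partial derivative as a derivation of the algebra of smooth functions. -/
noncomputable def pder (i : Fin n) : Derivation ℝ (Smooth n) (Smooth n) :=
  Derivation.mk'
    { toFun := fun f => ⟨pd i f, mem_smooth.2 (contDiff_pd i (Smooth.contDiff f))⟩
      map_add' := fun f g => by
        ext x
        simp [pd, fderiv_add (Smooth.differentiable f x) (Smooth.differentiable g x)]
      map_smul' := fun r f => by
        ext x
        simp [pd, fderiv_const_smul (Smooth.differentiable f x)] }
    (fun f g => by
      ext x
      simp [pd, fderiv_mul (Smooth.differentiable f x) (Smooth.differentiable g x)])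

lemma coe_der (i : Fin n) (f : Smooth n) : (der pder i f : (Fin n → ℝ) → ℝ) = pd i f := rfl

/-- Symmetry of second derivatives. -/
lemma commute_der (i j : Fin n) : Commute (der (pder (n := n)) i) (der pder j) := by
  ext f x
  have key : ∀ i j : Fin n, pd i (pd j (f : (Fin n → ℝ) → ℝ)) x =
      fderiv ℝ (fderiv ℝ (f : (Fin n → ℝ) → ℝ)) x (Pi.single i 1) (Pi.single j 1) := by
    intro i j
    have hd : DifferentiableAt ℝ (fderiv ℝ (f : (Fin n → ℝ) → ℝ)) x :=
      ((Smooth.contDiff f).fderiv_right (m := (⊤ : ℕ∞)) (by simp)).differentiable (by simp) x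
    change fderiv ℝ (fun y => fderiv ℝ (f : (Fin n → ℝ) → ℝ) y (Pi.single j 1)) x _ = _
    rw [fderiv_clm_apply hd (differentiableAt_const _)]
    simp
  change pd i (pd j (f : (Fin n → ℝ) → ℝ)) x = pd j (pd i (f : (Fin n → ℝ) → ℝ)) x
  rw [key, key]
  have hs : IsSymmSndFDerivAt ℝ (f : (Fin n → ℝ) → ℝ) x :=
    (Smooth.contDiff f).contDiffAt.isSymmSndFDerivAt
      (by simp only [minSmoothness_of_isRCLikeNormedField]; exact WithTop.coe_le_coe.2 (le_top (a := (2 : ℕ∞))))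
  exact hs _ _

lemma coe_word (l : List (Fin n)) (f : Smooth n) :
    (word pder l f : (Fin n → ℝ) → ℝ) = l.foldr pd f := by
  induction l with
  | nil => simp [word]
  | cons i l ih => rw [word_cons, Module.End.mul_apply, coe_der, ih, List.foldr_cons]

lemma coe_der_pow (i : Fin n) (k : ℕ) (f : Smooth n) :
    ((der pder i ^ k) f : (Fin n → ℝ) → ℝ) = (pd i)^[k] f := by
  induction k with
  | zero => simp
  | succ k ih => rw [pow_succ', Module.End.mul_apply, coe_der, ih, Function.iterate_succ_apply']

lemma coe_multi (α : Fin n → ℕ) (f : Smooth n) :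
    (multi pder α f : (Fin n → ℝ) → ℝ) = pdMulti α f := by
  unfold multi pdMulti
  induction List.finRange n with
  | nil => simp
  | cons i l ih =>
    rw [List.map_cons, List.prod_cons, Module.End.mul_apply, coe_der_pow, ih, List.foldr_cons]

lemma coe_lop (a : Finset (Fin n) → Smooth n) (J : Finset (Fin n)) (f : Smooth n) :
    (lop pder a J f : (Fin n → ℝ) → ℝ) = Lop (fun K => (a K : (Fin n → ℝ) → ℝ)) J f := by
  ext x
  simp [lop, Lop, pdSet, coe_word]

/-- The commutator in the endomorphism ring computes the commutator of the operators `Lop`. -/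
lemma comm_apply (a : Finset (Fin n) → Smooth n) (J K : Finset (Fin n)) (f : Smooth n)
    (x : Fin n → ℝ) :
    Lop (fun K => (a K : (Fin n → ℝ) → ℝ)) J (Lop (fun K => (a K : (Fin n → ℝ) → ℝ)) K f) x -
      Lop (fun K => (a K : (Fin n → ℝ) → ℝ)) K (Lop (fun K => (a K : (Fin n → ℝ) → ℝ)) J f) x =
      (lopComm pder a J K f : (Fin n → ℝ) → ℝ) x := by
  rw [← coe_lop, ← coe_lop, ← coe_lop, ← coe_lop]
  rfl

end CommOrder

open CommOrder

/-- the commutator `L_J∘L_K − L_K∘L_J` is a differential operator of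
order at most `|J| + |K| − 2`: there are smooth coefficients `c_α`, for multi-indices
`α` with `|α| ≤ |J| + |K| − 2`, with
`L_J(L_K f) − L_K(L_J f) = Σ_α c_α · ∂^α f` for all smooth `f`. -/
theorem commutator_order (n : ℕ) (hn : 1 ≤ n)
    (a : Finset (Fin n) → (Fin n → ℝ) → ℝ)
    (ha : ∀ K, ContDiff ℝ (⊤ : ℕ∞) (a K)) (ha0 : a ∅ = fun _ => 1)
    (J K : Finset (Fin n)) :
    ∃ c : (Fin n → ℕ) → (Fin n → ℝ) → ℝ,
      (∀ α, ContDiff ℝ (⊤ : ℕ∞) (c α)) ∧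
      ∀ f : (Fin n → ℝ) → ℝ, ContDiff ℝ (⊤ : ℕ∞) f → ∀ x : Fin n → ℝ,
        Lop a J (Lop a K f) x - Lop a K (Lop a J f) x =
          ∑ α ∈ (Fintype.piFinset fun _ : Fin n =>
                Finset.range (J.card + K.card - 1)).filter
              (fun α => ∑ i, α i ≤ J.card + K.card - 2),
            c α x * pdMulti α f x := by
  let A : Finset (Fin n) → Smooth n := fun K => ⟨a K, mem_smooth.2 (ha K)⟩
  have hA0 : A ∅ = 1 := Subtype.ext ha0
  have hcomm : ∀ (f : (Fin n → ℝ) → ℝ) (hf : ContDiff ℝ (⊤ : ℕ∞) f) (x : Fin n → ℝ), _ :=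
    fun f hf x => comm_apply A J K ⟨f, mem_smooth.2 hf⟩ x
  by_cases hJK : J = ∅ ∨ K = ∅
  · refine ⟨fun _ _ => 0, fun _ => contDiff_const, fun f hf x => ?_⟩
    refine (hcomm f hf x).trans ?_
    simp [lopComm_eq_zero pder A hA0 hJK]
  · rw [not_or, ← ne_eq, ← ne_eq, ← Finset.nonempty_iff_ne_empty,
      ← Finset.nonempty_iff_ne_empty] at hJK
    obtain ⟨p, hp⟩ := Nat.exists_eq_add_of_le' hJK.1.card_pos
    obtain ⟨q, hq⟩ := Nat.exists_eq_add_of_le' hJK.2.card_pos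
    obtain ⟨c, hc⟩ := exists_coeff pder commute_der (lopComm_mem pder commute_der A hA0 hp hq)
    refine ⟨fun α => c α, fun α => Smooth.contDiff (c α), fun f hf x => ?_⟩
    have e1 : J.card + K.card - 1 = p + q + 1 := by omega
    have e2 : J.card + K.card - 2 = p + q := by omega
    refine (hcomm f hf x).trans ?_
    rw [hc, e1, e2]
    simp [coe_multi]
end
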